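/- Let K : ℝ → ℝ be continuous and let a, b be scalar Jacobi fields for K with W := a(t₁)·b'(t₁) − a'(t₁)·b(t₁) ≠ 0. Suppose t₁ ≠ t₂ and λ₁, λ₂ are nonzero real numbers with λ₁·a(t₁) = λ₂·a(t₂) and λ₁·b(t₁) = λ₂·b(t₂). Then c(t) := a(t₁)·b(t) − b(t₁)·a(t) is a nontrivial scalar Jacobi field vanishing at both t₁ and t₂ (so t₁ and t₂ are conjugate for K), and moreover c'(t₁) = W and λ₁·c'(t₂) = λ₂·W; equivalently, with λ := λ₁/W ≠ 0 one has λ₁ = λ·c'(t₁) and λ₂ = λ·c'(t₂). -/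

import Mathlib

/-- A scalar Jacobi field for the curvature function `K` is a `C²` function `c : ℝ → ℝ`
satisfying `c'' + K c = 0`. -/
def IsJacobiField (K : ℝ → ℝ) (c : ℝ → ℝ) : Prop :=
  ContDiff ℝ 2 c ∧ ∀ t : ℝ, deriv (deriv c) t + K t * c t = 0

/-!
Freezing one vector of the determinant of the plane curve `(a, b)` at `s` gives a Jacobi field
`c_s` with `c_s(s) = 0` and `c_s'(s) = W(s)`, and `W` is constant. Since
`λ₁ (a, b)(t₁) = λ₂ (a, b)(t₂)`, linearity of the determinant gives `λ₁ c_{t₁} = λ₂ c_{t₂}`;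
this identity and its derivative, read at `t₂`, are the two assertions about `t₂`.
-/

section Determinants

/-- The determinant of the vectors `(f s, g s)` and `(f t, g t)` on the plane curve `(f, g)`.
It is curried in `t`, so that `curveDet f g s` is the combination of `f` and `g` obtained by
freezing the first vector at `s`. -/
def curveDet {ι R : Type*} [CommRing R] (f g : ι → R) (s : ι) : ι → R :=
  fun t => f s * g t - g s * f t

theorem curveDet_self {ι R : Type*} [CommRing R] (f g : ι → R) (s : ι) :
    curveDet f g s s = 0 := by
  simp only [curveDet, mul_comm, sub_self]

theorem mul_curveDet_eq {ι R : Type*} [CommRing R] {f g : ι → R} {s₁ s₂ : ι} {l₁ l₂ : R}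
    (hf : l₁ * f s₁ = l₂ * f s₂) (hg : l₁ * g s₁ = l₂ * g s₂) (t : ι) :
    l₁ * curveDet f g s₁ t = l₂ * curveDet f g s₂ t := by
  simp only [curveDet, mul_sub, ← mul_assoc, hf, hg]

variable {𝕜 A : Type*} [NontriviallyNormedField 𝕜] [NormedCommRing A] [NormedAlgebra 𝕜 A]
  {f g : 𝕜 → A}

/-- The Wronskian of two functions of one variable. It is meaningful only where both functions are
differentiable, since `deriv` is `0` elsewhere. -/
noncomputable def wronskian (f g : 𝕜 → A) (t : 𝕜) : A :=
  f t * deriv g t - deriv f t * g t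

theorem deriv_curveDet (s : 𝕜) {t : 𝕜} (hf : DifferentiableAt 𝕜 f t)
    (hg : DifferentiableAt 𝕜 g t) :
    deriv (curveDet f g s) t = f s * deriv g t - g s * deriv f t :=
  ((hg.hasDerivAt.const_mul (f s)).sub (hf.hasDerivAt.const_mul (g s))).deriv

theorem deriv_curveDet_self {s : 𝕜} (hf : DifferentiableAt 𝕜 f s)
    (hg : DifferentiableAt 𝕜 g s) : deriv (curveDet f g s) s = wronskian f g s := by
  rw [deriv_curveDet s hf hg, wronskian, mul_comm (g s)]

theorem hasDerivAt_wronskian {t : 𝕜} (hf : DifferentiableAt 𝕜 f t)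
    (hg : DifferentiableAt 𝕜 g t) (hf' : DifferentiableAt 𝕜 (deriv f) t)
    (hg' : DifferentiableAt 𝕜 (deriv g) t) :
    HasDerivAt (wronskian f g) (f t * deriv (deriv g) t - deriv (deriv f) t * g t) t := by
  refine ((hf.hasDerivAt.mul hg'.hasDerivAt).sub
    (hf'.hasDerivAt.mul hg.hasDerivAt)).congr_deriv ?_
  ring

end Determinants

namespace IsJacobiField

variable {K a b : ℝ → ℝ}

theorem differentiable (ha : IsJacobiField K a) : Differentiable ℝ a :=
  ha.1.differentiable two_ne_zero

theorem differentiable_deriv (ha : IsJacobiField K a) : Differentiable ℝ (deriv a) :=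
  ha.1.differentiable_deriv_two

theorem deriv_deriv (ha : IsJacobiField K a) (t : ℝ) : deriv (deriv a) t = -(K t * a t) :=
  eq_neg_of_add_eq_zero_left (ha.2 t)

theorem const_mul (ha : IsJacobiField K a) (r : ℝ) : IsJacobiField K (fun t => r * a t) := by
  refine ⟨contDiff_const.mul ha.1, fun t => ?_⟩
  rw [deriv_const_mul_field', deriv_const_mul_field, ha.deriv_deriv]
  ring

theorem sub (ha : IsJacobiField K a) (hb : IsJacobiField K b) :
    IsJacobiField K (fun t => a t - b t) := by
  refine ⟨ha.1.sub hb.1, fun t => ?_⟩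
  have hderiv : deriv (fun t => a t - b t) = fun t => deriv a t - deriv b t :=
    funext fun t => deriv_fun_sub (ha.differentiable t) (hb.differentiable t)
  rw [hderiv, deriv_fun_sub (ha.differentiable_deriv t) (hb.differentiable_deriv t),
    ha.deriv_deriv, hb.deriv_deriv]
  ring

protected theorem curveDet (ha : IsJacobiField K a) (hb : IsJacobiField K b) (s : ℝ) :
    IsJacobiField K (curveDet a b s) :=
  (hb.const_mul (a s)).sub (ha.const_mul (b s))

theorem wronskian_eq (ha : IsJacobiField K a) (hb : IsJacobiField K b) (s t : ℝ) :
    wronskian a b s = wronskian a b t := by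
  have hderiv (u : ℝ) : HasDerivAt (wronskian a b) 0 u := by
    refine (hasDerivAt_wronskian (ha.differentiable u) (hb.differentiable u)
      (ha.differentiable_deriv u) (hb.differentiable_deriv u)).congr_deriv ?_
    rw [ha.deriv_deriv, hb.deriv_deriv]
    ring
  exact is_const_of_deriv_eq_zero (fun u => (hderiv u).differentiableAt)
    (fun u => (hderiv u).deriv) s t

theorem deriv_curveDet_self (ha : IsJacobiField K a) (hb : IsJacobiField K b) (s : ℝ) :
    deriv (curveDet a b s) s = wronskian a b s :=
  _root_.deriv_curveDet_self (ha.differentiable s) (hb.differentiable s)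

theorem mul_deriv_curveDet_eq (ha : IsJacobiField K a) (hb : IsJacobiField K b) {t₁ t₂ l₁ l₂ : ℝ}
    (hea : l₁ * a t₁ = l₂ * a t₂) (heb : l₁ * b t₁ = l₂ * b t₂) :
    l₁ * deriv (curveDet a b t₁) t₂ = l₂ * wronskian a b t₁ :=
  calc l₁ * deriv (curveDet a b t₁) t₂
      = deriv (fun t => l₁ * curveDet a b t₁ t) t₂ := (deriv_const_mul_field l₁).symm
    _ = deriv (fun t => l₂ * curveDet a b t₂ t) t₂ := by
        rw [funext (mul_curveDet_eq hea heb)]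
    _ = l₂ * deriv (curveDet a b t₂) t₂ := deriv_const_mul_field l₂
    _ = l₂ * wronskian a b t₁ := by rw [ha.deriv_curveDet_self hb, ha.wronskian_eq hb]

end IsJacobiField

/-- If `λ₁ a(t₁) = λ₂ a(t₂)` and `λ₁ b(t₁) = λ₂ b(t₂)` with `λ₁, λ₂ ≠ 0` and `t₁ ≠ t₂`,
then `c(t) = a(t₁) b(t) − b(t₁) a(t)` is a nontrivial Jacobi field vanishing at `t₁` and
`t₂` (so `t₁, t₂` are conjugate), with `c'(t₁) = W`, `λ₁ c'(t₂) = λ₂ W`; equivalently,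
with `λ := λ₁/W ≠ 0` one has `λ₁ = λ c'(t₁)` and `λ₂ = λ c'(t₂)`. -/
theorem conjugate_points_from_equal_projections (K a b : ℝ → ℝ) (hK : Continuous K)
    (ha : IsJacobiField K a) (hb : IsJacobiField K b)
    (t₁ t₂ : ℝ) (ht : t₁ ≠ t₂)
    (W : ℝ) (hW : W = a t₁ * deriv b t₁ - deriv a t₁ * b t₁) (hW0 : W ≠ 0)
    (l₁ l₂ : ℝ) (hl₁ : l₁ ≠ 0) (hl₂ : l₂ ≠ 0)
    (hea : l₁ * a t₁ = l₂ * a t₂) (heb : l₁ * b t₁ = l₂ * b t₂)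
    (c : ℝ → ℝ) (hcdef : c = fun t => a t₁ * b t - b t₁ * a t) :
    IsJacobiField K c ∧ ¬ (∀ t : ℝ, c t = 0) ∧ c t₁ = 0 ∧ c t₂ = 0 ∧
    deriv c t₁ = W ∧ l₁ * deriv c t₂ = l₂ * W ∧
    (l₁ / W ≠ 0 ∧ l₁ = (l₁ / W) * deriv c t₁ ∧ l₂ = (l₁ / W) * deriv c t₂) := by
  obtain rfl : c = curveDet a b t₁ := hcdef
  obtain rfl : W = wronskian a b t₁ := hW
  have deriv_t₁ : deriv (curveDet a b t₁) t₁ = wronskian a b t₁ := ha.deriv_curveDet_self hb t₁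
  have deriv_t₂ : l₁ * deriv (curveDet a b t₁) t₂ = l₂ * wronskian a b t₁ :=
    ha.mul_deriv_curveDet_eq hb hea heb
  have nontrivial : ¬ ∀ t, curveDet a b t₁ t = 0 := fun h =>
    hW0 (by rw [← deriv_t₁, funext h, deriv_const])
  have vanishes_t₂ : curveDet a b t₁ t₂ = 0 := by
    apply mul_left_cancel₀ hl₁
    rw [mul_curveDet_eq hea heb, curveDet_self, mul_zero, mul_zero]
  refine ⟨ha.curveDet hb t₁, nontrivial, curveDet_self a b t₁, vanishes_t₂, deriv_t₁, deriv_t₂,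
    div_ne_zero hl₁ hW0, ?_, ?_⟩
  · rw [deriv_t₁, div_mul_cancel₀ l₁ hW0]
  · rw [div_mul_eq_mul_div, deriv_t₂, mul_div_cancel_right₀ l₂ hW0]
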